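/- arXiv:1710.09502 — 2 statements merged into one kernel-verified Lean document; each statement's English description precedes it below -/
import Mathlib

section
/- Let variables x be partitioned into d groups and let M(x) ∈ Mat_m(F[x]) be a matrix whose entries are homogeneous set-multilinear polynomials of degree d with respect to this partition, over a field F of characteristic zero. If the symbolic rank of M(x) is at most r, then M(x) can be written as a sum of at most r·2^d rank-one matrices f_i(x) ⊗ g_i(x), where for each i there is a partition S_i ⊔ ([d]∖S_i) of the groups such that f_i is homogeneous set-multilinear with respect to the groups in S_i and g_i with respect to the groups in [d]∖S_i. -/
open MvPolynomial in
theorem aux_shift {σ F : Type*} [Field F] (a : σ → F) (u : σ →₀ ℕ) :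
    ∀ e : σ →₀ ℕ, u.degree ≤ e.degree →
      coeff e (aeval (fun s => (X s + C (a s) : MvPolynomial σ F)) (monomial u (1:F)))
        = coeff e (monomial u (1:F)) := by
  classical
  obtain ⟨N, hN⟩ : ∃ N, u.degree = N := ⟨_, rfl⟩
  induction N generalizing u with
  | zero =>
    intro e _
    have : u = 0 := by rwa [Finsupp.degree_eq_zero_iff] at hN
    subst this
    rw [← C_apply, algHom_C, algebraMap_eq]
  | succ N ih =>
    intro e he
    obtain ⟨s, hs⟩ : ∃ s, u s ≠ 0 := by
      by_contra! h
      have : u = 0 := Finsupp.ext h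
      simp [this] at hN
    obtain ⟨v, rfl⟩ : ∃ v, u = v + Finsupp.single s 1 :=
      ⟨u - Finsupp.single s 1, by
        rw [tsub_add_cancel_of_le]
        simpa using Nat.one_le_iff_ne_zero.2 hs⟩
    have hv : v.degree = N := by simpa using hN
    have hmul : monomial (v + Finsupp.single s 1) (1:F) = monomial v (1:F) * X s := by
      rw [X, monomial_mul, one_mul]
    rw [hmul, map_mul, aeval_X, mul_add, coeff_add, mul_comm _ (C (a s)), coeff_C_mul, coeff_mul_X', coeff_mul_X']
    have h0 : coeff e (monomial v (1:F)) = 0 := by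
      rw [coeff_monomial, if_neg]
      rintro rfl
      omega
    rw [ih v hv e (by omega), h0, mul_zero, add_zero]
    split_ifs with hse
    · apply ih v hv
      have : e = (e - Finsupp.single s 1) + Finsupp.single s 1 := by
        rw [tsub_add_cancel_of_le]
        simpa using Nat.one_le_iff_ne_zero.2 (Finsupp.mem_support_iff.1 hse)
      have h3 := congrArg Finsupp.degree this
      simp only [map_add, Finsupp.degree_single] at h3
      omega
    · rfl

open MvPolynomial in
theorem aux_shift' {σ F : Type*} [Field F] (a : σ → F) (p : MvPolynomial σ F) (e : σ →₀ ℕ)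
    (h : ∀ u ∈ p.support, u.degree ≤ e.degree) :
    coeff e (aeval (fun s => (X s + C (a s) : MvPolynomial σ F)) p) = coeff e p := by
  classical
  conv_lhs => rw [p.as_sum]
  conv_rhs => rw [p.as_sum]
  rw [map_sum, coeff_sum, coeff_sum]
  refine Finset.sum_congr rfl fun u hu => ?_
  have : monomial u (coeff u p) = (coeff u p) • monomial u (1:F) := by
    rw [smul_monomial, smul_eq_mul, mul_one]
  rw [this, map_smul, coeff_smul, coeff_smul, aux_shift a u e (h u hu)]

theorem aux_rank {K : Type*} [Field K] {m : ℕ} (M : Matrix (Fin m) (Fin m) K) :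
    ∃ (P : Fin m → Fin M.rank → K) (Q : Fin M.rank → Fin m → K),
      ∀ p q, M p q = ∑ i, P p i * Q i q := by
  let b : Module.Basis (Fin M.rank) K (LinearMap.range M.mulVecLin) := Module.finBasis K _
  let c : Fin m → LinearMap.range M.mulVecLin := fun q => ⟨M.col q, ⟨Pi.single q 1, by simp⟩⟩
  refine ⟨fun p i => (b i : Fin m → K) p, fun i q => b.repr (c q) i, fun p q => ?_⟩
  have h := congrArg (fun v : LinearMap.range M.mulVecLin => (v : Fin m → K) p) (b.sum_repr (c q))
  simp only [Submodule.coe_sum, Submodule.coe_smul, Finset.sum_apply, Pi.smul_apply,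
    smul_eq_mul] at h
  rw [show M p q = (c q : Fin m → K) p from rfl, ← h]
  exact Finset.sum_congr rfl fun i _ => mul_comm _ _

/-- exponent of type `T` -/
def IsTy {d n : ℕ} (T : Finset (Fin d)) (e : Fin d × Fin n →₀ ℕ) : Prop :=
  (∀ k ∈ T, (∑ j : Fin n, e (k, j)) = 1) ∧ ∀ k ∉ T, ∀ j, e (k, j) = 0

theorem IsTy.sum_notMem {d n : ℕ} {T : Finset (Fin d)} {e : Fin d × Fin n →₀ ℕ} (h : IsTy T e)
    {k : Fin d} (hk : k ∉ T) : (∑ j : Fin n, e (k, j)) = 0 :=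
  Finset.sum_eq_zero fun j _ => h.2 k hk j

theorem isTy_finite {d n : ℕ} (T : Finset (Fin d)) :
    {e : Fin d × Fin n →₀ ℕ | IsTy T e}.Finite := by
  refine (Set.finite_Iic (Finsupp.equivFunOnFinite.symm fun _ => 1)).subset ?_
  intro e he
  rw [Set.mem_Iic]
  intro ⟨k, j⟩
  by_cases hk : k ∈ T
  · have := he.1 k hk
    have h2 := Finset.single_le_sum (f := fun j => e (k, j)) (fun _ _ => Nat.zero_le _)
      (Finset.mem_univ j)
    simp only [this] at h2
    simpa using h2
  · simp [he.2 k hk j]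

open Classical in
/-- projection to type `T` -/
noncomputable def proj {F : Type*} [Field F] {d n : ℕ} (T : Finset (Fin d))
    (f : MvPowerSeries (Fin d × Fin n) F) : MvPolynomial (Fin d × Fin n) F :=
  ∑ e ∈ (isTy_finite (n := n) T).toFinset, MvPolynomial.monomial e (MvPowerSeries.coeff e f)

open Classical in
theorem coeff_proj {F : Type*} [Field F] {d n : ℕ} (T : Finset (Fin d))
    (f : MvPowerSeries (Fin d × Fin n) F) (e) :
    MvPolynomial.coeff e (proj T f) = if IsTy T e then MvPowerSeries.coeff e f else 0 := by
  simp [proj, MvPolynomial.coeff_sum, MvPolynomial.coeff_monomial]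

theorem proj_support {F : Type*} [Field F] {d n : ℕ} (T : Finset (Fin d))
    (f : MvPowerSeries (Fin d × Fin n) F) (e) (he : e ∈ (proj T f).support) : IsTy T e := by
  classical
  rw [MvPolynomial.mem_support_iff, coeff_proj] at he
  by_contra h
  simp [h] at he

theorem isTy_add {d n : ℕ} {S : Finset (Fin d)} {u v : Fin d × Fin n →₀ ℕ}
    (hu : IsTy S u) (hv : IsTy Sᶜ v) : IsTy Finset.univ (u + v) := by
  refine ⟨fun k _ => ?_, by simp⟩
  simp only [Finsupp.add_apply, Finset.sum_add_distrib]
  by_cases hk : k ∈ S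
  · rw [hu.1 k hk, hv.sum_notMem (by simpa using hk)]
  · rw [hu.sum_notMem hk, hv.1 k (by simpa using hk)]

theorem isTy_split {d n : ℕ} {u v : Fin d × Fin n →₀ ℕ} (h : IsTy Finset.univ (u + v))
    (S : Finset (Fin d)) :
    (IsTy S u ∧ IsTy Sᶜ v) ↔
      S = Finset.univ.filter (fun k => (∑ j : Fin n, u (k, j)) = 1) := by
  have hs : ∀ k, (∑ j : Fin n, u (k, j)) + (∑ j : Fin n, v (k, j)) = 1 := by
    intro k
    have := h.1 k (Finset.mem_univ k)
    simpa only [Finsupp.add_apply, Finset.sum_add_distrib] using this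
  constructor
  · rintro ⟨hu, hv⟩
    ext k
    simp only [Finset.mem_filter, Finset.mem_univ, true_and]
    refine ⟨fun hk => hu.1 k hk, fun hk => ?_⟩
    by_contra hk'
    have := hu.sum_notMem hk'
    omega
  · rintro rfl
    refine ⟨⟨fun k hk => by simpa using hk, fun k hk j => ?_⟩, ⟨fun k hk => ?_, fun k hk j => ?_⟩⟩
    · simp only [Finset.mem_filter, Finset.mem_univ, true_and] at hk
      have h0 : (∑ j : Fin n, u (k, j)) = 0 := by have := hs k; omega
      exact (Finset.sum_eq_zero_iff.1 h0) j (Finset.mem_univ j)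
    · simp only [Finset.mem_compl, Finset.mem_filter, Finset.mem_univ, true_and] at hk
      have := hs k; omega
    · simp only [Finset.mem_compl, Finset.mem_filter, Finset.mem_univ, true_and, not_not] at hk
      have h0 : (∑ j : Fin n, v (k, j)) = 0 := by have := hs k; omega
      exact (Finset.sum_eq_zero_iff.1 h0) j (Finset.mem_univ j)

theorem proj_mul {F : Type*} [Field F] {d n : ℕ}
    (f g : MvPowerSeries (Fin d × Fin n) F) :
    proj Finset.univ (f * g) = ∑ S : Finset (Fin d), proj S f * proj Sᶜ g := by
  classical
  ext e
  rw [coeff_proj, MvPolynomial.coeff_sum]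
  simp only [MvPolynomial.coeff_mul, MvPowerSeries.coeff_mul, coeff_proj]
  rw [Finset.sum_comm]
  split_ifs with h
  · refine Finset.sum_congr rfl fun x hx => ?_
    rw [Finset.HasAntidiagonal.mem_antidiagonal] at hx
    rw [← hx] at h
    rw [Finset.sum_eq_single
      (Finset.univ.filter (fun k => (∑ j : Fin n, x.1 (k, j)) = 1))]
    · obtain ⟨h1, h2⟩ := (isTy_split h _).2 rfl
      rw [if_pos h1, if_pos h2]
    · intro S _ hS
      have := mt (isTy_split h S).1 hS
      by_cases h1 : IsTy S x.1
      · rw [if_neg (c := IsTy Sᶜ x.2) (fun h2 => this ⟨h1, h2⟩), mul_zero]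
      · rw [if_neg h1, zero_mul]
    · simp
  · symm
    refine Finset.sum_eq_zero fun x hx => Finset.sum_eq_zero fun S _ => ?_
    rw [Finset.HasAntidiagonal.mem_antidiagonal] at hx
    by_cases h1 : IsTy S x.1
    · rw [if_neg (c := IsTy Sᶜ x.2) (fun h2 => h (hx ▸ isTy_add h1 h2)), mul_zero]
    · rw [if_neg h1, zero_mul]

theorem isTy_degree {d n : ℕ} {e : Fin d × Fin n →₀ ℕ} (h : IsTy Finset.univ e) :
    e.degree = d := by
  rw [Finsupp.degree_eq_sum, Fintype.sum_prod_type]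
  simp [fun k => h.1 k (Finset.mem_univ k)]

theorem proj_sum {F ι : Type*} [Field F] {d n : ℕ} (T : Finset (Fin d)) (s : Finset ι)
    (f : ι → MvPowerSeries (Fin d × Fin n) F) :
    proj T (∑ i ∈ s, f i) = ∑ i ∈ s, proj T (f i) := by
  classical
  ext e
  simp only [MvPolynomial.coeff_sum, coeff_proj, map_sum]
  split_ifs <;> simp

theorem stmt10 (F : Type*) [Field F] [CharZero F] (n m d r : ℕ)
    (M : Matrix (Fin m) (Fin m) (MvPolynomial (Fin d × Fin n) F))
    (hM : ∀ p q, ∀ e ∈ (M p q).support, ∀ k : Fin d, (∑ j : Fin n, e (k, j)) = 1)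
    (hr : (M.map (algebraMap (MvPolynomial (Fin d × Fin n) F)
      (FractionRing (MvPolynomial (Fin d × Fin n) F)))).rank ≤ r) :
    ∃ R, R ≤ r * 2 ^ d ∧
      ∃ f g : Fin R → Fin m → MvPolynomial (Fin d × Fin n) F,
      ∃ S : Fin R → Finset (Fin d),
        (∀ i p, ∀ e ∈ (f i p).support,
          (∀ k ∈ S i, (∑ j : Fin n, e (k, j)) = 1) ∧ ∀ k ∉ S i, ∀ j, e (k, j) = 0) ∧
        (∀ i p, ∀ e ∈ (g i p).support,
          (∀ k ∉ S i, (∑ j : Fin n, e (k, j)) = 1) ∧ ∀ k ∈ S i, ∀ j, e (k, j) = 0) ∧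
        M = ∑ i, Matrix.of fun p q => f i p * g i q := by
  classical
  obtain ⟨P, Q, hPQ⟩ := aux_rank (M.map (algebraMap (MvPolynomial (Fin d × Fin n) F)
      (FractionRing (MvPolynomial (Fin d × Fin n) F))))
  generalize (M.map (algebraMap (MvPolynomial (Fin d × Fin n) F)
      (FractionRing (MvPolynomial (Fin d × Fin n) F)))).rank = ρ at *
  obtain ⟨D1, hD1⟩ := IsLocalization.exist_integer_multiples_of_finite
    (nonZeroDivisors (MvPolynomial (Fin d × Fin n) F)) (fun x : Fin m × Fin ρ => P x.1 x.2)
  obtain ⟨D2, hD2⟩ := IsLocalization.exist_integer_multiples_of_finite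
    (nonZeroDivisors (MvPolynomial (Fin d × Fin n) F)) (fun x : Fin ρ × Fin m => Q x.1 x.2)
  choose P' hP' using hD1
  choose Q' hQ' using hD2
  set D : MvPolynomial (Fin d × Fin n) F := D1 * D2 with hD
  have hD0 : D ≠ 0 := nonZeroDivisors.ne_zero (D1 * D2).2
  have key : ∀ p q, D * M p q = ∑ i, P' (p, i) * Q' (i, q) := by
    intro p q
    apply IsFractionRing.injective (MvPolynomial (Fin d × Fin n) F)
      (FractionRing (MvPolynomial (Fin d × Fin n) F))
    have := hPQ p q
    rw [Matrix.map_apply] at this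
    simp only [map_mul, map_sum, hP', hQ', this, hD, Algebra.smul_def, Finset.mul_sum]
    exact Finset.sum_congr rfl fun i _ => by ring
  obtain ⟨a, ha⟩ : ∃ a : Fin d × Fin n → F, MvPolynomial.eval a D ≠ 0 := by
    by_contra! h
    exact hD0 (MvPolynomial.funext fun x => by simp [h x])
  let φ₀ : MvPolynomial (Fin d × Fin n) F →ₐ[F] MvPolynomial (Fin d × Fin n) F :=
    MvPolynomial.aeval (fun s => MvPolynomial.X s + MvPolynomial.C (a s))
  let φ : MvPolynomial (Fin d × Fin n) F →+* MvPowerSeries (Fin d × Fin n) F :=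
    MvPolynomial.coeToMvPowerSeries.ringHom.comp φ₀.toRingHom
  have hφ : ∀ p e, MvPowerSeries.coeff e (φ p) = MvPolynomial.coeff e (φ₀ p) := by
    intro p e
    simp [φ]
  have hunit : IsUnit (φ D) := by
    rw [MvPowerSeries.isUnit_iff_constantCoeff, isUnit_iff_ne_zero,
      ← MvPowerSeries.coeff_zero_eq_constantCoeff_apply, hφ]
    have h1 : MvPolynomial.coeff 0 (φ₀ D) = MvPolynomial.eval a D := by
      rw [← MvPolynomial.constantCoeff_eq]
      have : (MvPolynomial.constantCoeff.comp φ₀.toRingHom) = MvPolynomial.eval a := by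
        ext <;> simp [φ₀]
      exact congrArg (fun h => h D) this
    rwa [h1]
  obtain ⟨U, hU⟩ := hunit.exists_right_inv
  have key2 : ∀ p q, φ (M p q) = ∑ i, φ (P' (p, i)) * (U * φ (Q' (i, q))) := by
    intro p q
    have h := congrArg (fun z => U * φ z) (key p q)
    simp only [map_mul, map_sum, Finset.mul_sum] at h
    rw [← mul_assoc, mul_comm U, hU, one_mul] at h
    rw [h]
    exact Finset.sum_congr rfl fun i _ => by ring
  have hproj : ∀ p q, proj Finset.univ (φ (M p q)) = M p q := by
    intro p q
    have hT : ∀ e ∈ (M p q).support, IsTy Finset.univ e := fun e he =>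
      ⟨fun k _ => hM p q e he k, by simp⟩
    ext e
    rw [coeff_proj]
    split_ifs with h
    · rw [hφ]
      exact aux_shift' a _ e fun u hu => by rw [isTy_degree h, isTy_degree (hT u hu)]
    · by_contra h'
      exact h (hT e (MvPolynomial.mem_support_iff.2 (Ne.symm h')))
  have hcard : Fintype.card (Fin ρ × Finset (Fin d)) = ρ * 2 ^ d := by simp
  let E : Fin (ρ * 2 ^ d) ≃ Fin ρ × Finset (Fin d) := (Fintype.equivFinOfCardEq hcard).symm
  refine ⟨ρ * 2 ^ d, Nat.mul_le_mul_right _ hr,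
    fun i p => proj (E i).2 (φ (P' (p, (E i).1))),
    fun i q => proj ((E i).2)ᶜ (U * φ (Q' ((E i).1, q))), fun i => (E i).2,
    fun i p e he => proj_support _ _ e he, fun i p e he => ?_, ?_⟩
  · have := proj_support _ _ e he
    exact ⟨fun k hk => this.1 k (by simpa using hk), fun k hk => this.2 k (by simpa using hk)⟩
  · ext1 p q
    rw [← hproj p q, key2, proj_sum, Matrix.sum_apply]
    simp only [Matrix.of_apply]
    rw [E.sum_comp (fun x => proj x.2 (φ (P' (p, x.1))) * proj (x.2)ᶜ (U * φ (Q' (x.1, q)))),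
      Fintype.sum_prod_type]
    exact Finset.sum_congr rfl fun i _ => proj_mul _ _
end

section
/- Let F be an algebraically closed field of characteristic zero and let L : F[x_1,...,x_n]_{≤d} → Mat_m(F) be any linear map such that rank(L(ℓ(x)^d)) ≤ r for every affine form ℓ(x) = a_0 + ∑ a_i x_i. Then for every polynomial f(x) of degree at most d, rank(L(f)) ≤ r(d+1)·binomial(n + ⌊d/2⌋, n). -/
open Matrix in
lemma aux_factor {F : Type*} [Field F] [CharZero F] {n m : ℕ}
    (N : Matrix (Fin m) (Fin m) (MvPolynomial (Fin n) F)) (s : ℕ)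
    (hs : (N.map (MvPolynomial.eval (0 : Fin n → F))).rank = s)
    (hr : ∀ a : Fin n → F, (N.map (MvPolynomial.eval a)).rank ≤ s) :
    ∃ (U : Matrix (Fin m) (Fin s) (MvPowerSeries (Fin n) F))
      (V : Matrix (Fin s) (Fin m) (MvPowerSeries (Fin n) F)),
      N.map (MvPolynomial.coeToMvPowerSeries.ringHom (σ := Fin n) (R := F)) = U * V := by
  obtain ⟨P, Q, hPQ⟩ : ∃ (P : Matrix (Fin s) (Fin m) F) (Q : Matrix (Fin m) (Fin s) F),
      P * N.map (MvPolynomial.eval (0 : Fin n → F)) * Q = 1 := by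
    subst hs
    obtain ⟨V0, U0, e, -, -, h0⟩ :=
      exists_rank_normal_form (N.map (MvPolynomial.eval (0 : Fin n → F)))
    refine ⟨V0.submatrix (e.symm ∘ Sum.inl) id, U0.submatrix id (e.symm ∘ Sum.inl), ?_⟩
    have : V0.submatrix (e.symm ∘ Sum.inl) id * N.map (MvPolynomial.eval (0 : Fin n → F)) *
        U0.submatrix id (e.symm ∘ Sum.inl) =
        (V0 * N.map (MvPolynomial.eval (0 : Fin n → F)) * U0).submatrix
          (e.symm ∘ Sum.inl) (e.symm ∘ Sum.inl) := by
      ext i j; simp [Matrix.mul_apply]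
    rw [this, h0]
    ext i j; simp [Matrix.one_apply]
  set φ := MvPolynomial.coeToMvPowerSeries.ringHom (σ := Fin n) (R := F) with hφ
  have hC : ∀ (a : Fin n → F) {k l : Type} (B : Matrix k l F),
      (B.map (MvPolynomial.C (σ := Fin n))).map (MvPolynomial.eval a) = B := by
    intro a k l B; ext i j; simp
  set Pc := P.map (MvPolynomial.C (σ := Fin n)) with hPc
  set Qc := Q.map (MvPolynomial.C (σ := Fin n)) with hQc
  set A := Pc * N * Qc with hA
  have hdet : IsUnit (A.map φ).det := by
    rw [MvPowerSeries.isUnit_iff_constantCoeff]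
    have h1 : (A.map φ).det = φ A.det := (RingHom.map_det φ A).symm
    have h2 : MvPowerSeries.constantCoeff (φ A.det) = MvPolynomial.eval (0 : Fin n → F) A.det := by
      rw [← MvPowerSeries.coeff_zero_eq_constantCoeff_apply, hφ,
        MvPolynomial.coeToMvPowerSeries.ringHom_apply, MvPolynomial.coeff_coe]
      change MvPolynomial.coeff 0 A.det = MvPolynomial.eval (fun _ => (0 : F)) A.det
      rw [MvPolynomial.eval_zero']
      rfl
    have h3 : MvPolynomial.eval (0 : Fin n → F) A.det = 1 := by
      rw [RingHom.map_det]
      have : (MvPolynomial.eval (0 : Fin n → F)).mapMatrix A = 1 := by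
        rw [RingHom.mapMatrix_apply, hA, Matrix.map_mul, Matrix.map_mul, hPc, hQc, hC, hC, hPQ]
      rw [this, det_one]
    rw [h1, h2, h3]; exact isUnit_one
  have : Invertible (A.map φ) := invertibleOfIsUnitDet _ hdet
  refine ⟨(N * Qc).map φ * ⅟(A.map φ), (Pc * N).map φ, ?_⟩
  ext1 i j
  set R : Matrix Unit (Fin m) F := (1 : Matrix (Fin m) (Fin m) F).submatrix (fun _ => i) id with hR
  set K : Matrix (Fin m) Unit F := (1 : Matrix (Fin m) (Fin m) F).submatrix id (fun _ => j) with hK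
  set Rc := R.map (MvPolynomial.C (σ := Fin n)) with hRc
  set Kc := K.map (MvPolynomial.C (σ := Fin n)) with hKc
  have hW : (fromBlocks A (Pc * N * Kc) (Rc * N * Qc) (Rc * N * Kc)).det = 0 := by
    apply MvPolynomial.funext
    intro a
    rw [RingHom.map_det, map_zero, RingHom.mapMatrix_apply, fromBlocks_map]
    simp only [hA, Matrix.map_mul, hPc, hQc, hRc, hKc, hC]
    have hb : fromBlocks (P * N.map (MvPolynomial.eval a) * Q) (P * N.map (MvPolynomial.eval a) * K)
        (R * N.map (MvPolynomial.eval a) * Q) (R * N.map (MvPolynomial.eval a) * K)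
        = fromRows P R * (N.map (MvPolynomial.eval a) * fromCols Q K) := by
      rw [mul_fromCols, fromRows_mul_fromCols]
      simp only [Matrix.mul_assoc]
    rw [hb]
    by_contra hne
    have h1 := rank_of_det_ne_zero hne
    have h2 : (fromRows P R * (N.map (MvPolynomial.eval a) * fromCols Q K)).rank ≤ s :=
      (rank_mul_le_right _ _).trans ((rank_mul_le_left _ _).trans (hr a))
    rw [Fintype.card_sum, Fintype.card_fin, Fintype.card_unit] at h1
    omega
  have hW2 := congrArg φ hW
  rw [RingHom.map_det, map_zero, RingHom.mapMatrix_apply, fromBlocks_map, det_fromBlocks₁₁,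
    hdet.mul_right_eq_zero, det_unique] at hW2
  have e1 : (Rc * N * Kc) = N.submatrix (fun _ => i) (fun _ => j) := by
    ext a b : 2
    simp [hRc, hKc, hR, hK, Matrix.mul_apply, Matrix.one_apply, apply_ite, Finset.sum_ite_eq]
  have e2 : (Rc * N * Qc) = (N * Qc).submatrix (fun _ => i) id := by
    ext a b : 2
    simp [hRc, hR, Matrix.mul_apply, Matrix.one_apply, apply_ite]
  have e3 : (Pc * N * Kc) = (Pc * N).submatrix id (fun _ => j) := by
    ext a b : 2
    simp [hKc, hK, Matrix.mul_apply, Matrix.one_apply, apply_ite]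
  rw [e1, e2, e3, Matrix.sub_apply, sub_eq_zero] at hW2
  simpa [Matrix.mul_apply] using hW2

noncomputable def auxS (n e : ℕ) : Finset (Fin n →₀ ℕ) := (Finsupp.finite_of_degree_le e).toFinset

lemma mem_auxS {n e : ℕ} {α : Fin n →₀ ℕ} : α ∈ auxS n e ↔ α.degree ≤ e := by
  simp [auxS]

lemma card_auxS (n e : ℕ) : (auxS n e).card ≤ (n + e).choose n := by
  classical
  have h : (auxS n e).card ≤ ((Finset.univ : Finset (Option (Fin n))).finsuppAntidiag e).card := by
    refine Finset.card_le_card_of_injOn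
      (fun α => Finsupp.equivFunOnFinite.symm (fun o : Option (Fin n) => o.elim (e - α.degree) α))
      ?_ ?_
    · intro α hα
      have hα' : α.degree ≤ e := mem_auxS.1 hα
      simp only [Finset.mem_coe, Finset.mem_finsuppAntidiag, Finset.subset_univ, and_true]
      simp only [Finsupp.equivFunOnFinite_symm_apply_apply, Fintype.sum_option, Option.elim]
      rw [← Finsupp.degree_eq_sum]
      omega
    · intro α _ β _ hab
      ext i
      have := DFunLike.congr_fun hab (some i)
      simpa using this
  refine h.trans ?_
  rw [Finset.card_finsuppAntidiag_nat_eq_choose]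
  simp only [Finset.card_univ, Fintype.card_option, Fintype.card_fin]
  rw [show n + 1 + e - 1 = n + e by omega, Nat.choose_symm_add]

lemma aux_rank_sum {F : Type*} [Field F] {m s : ℕ} {κ : Type*} (S : Finset κ)
    (u : κ → Fin s → Fin m → F) (v : κ → Fin s → Fin m → F) :
    (Matrix.of fun i j => ∑ k, ∑ α ∈ S, u α k i * v α k j).rank ≤ s * S.card := by
  have : (Matrix.of fun i j => ∑ k, ∑ α ∈ S, u α k i * v α k j) =
    (Matrix.of fun i (p : Fin s × S) => u p.2 p.1 i) * (Matrix.of fun (p : Fin s × S) j => v p.2 p.1 j) := by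
    ext i j
    simp only [Matrix.of_apply, Matrix.mul_apply, Fintype.sum_prod_type]
    refine Finset.sum_congr rfl fun k _ => ?_
    rw [← Finset.sum_coe_sort]
  rw [this]
  refine (Matrix.rank_mul_le_left _ _).trans ((Matrix.rank_le_card_width _).trans ?_)
  simp

lemma aux_rank_add {F : Type*} [Field F] {m : ℕ} (A B : Matrix (Fin m) (Fin m) F) :
    (A + B).rank ≤ A.rank + B.rank := by
  unfold Matrix.rank
  rw [Matrix.mulVecLin_add]
  refine (Submodule.finrank_mono (LinearMap.range_add_le _ _)).trans ?_
  exact Submodule.finrank_add_le_finrank_add_finrank _ _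

lemma aux_local {F : Type*} [Field F] [CharZero F] {n m : ℕ} (d s : ℕ)
    (N : Matrix (Fin m) (Fin m) (MvPolynomial (Fin n) F))
    (hd : ∀ i j, (N i j).totalDegree ≤ d)
    (hs : (N.map (MvPolynomial.eval (0 : Fin n → F))).rank = s)
    (hr : ∀ a : Fin n → F, (N.map (MvPolynomial.eval a)).rank ≤ s)
    (ψ : MvPolynomial (Fin n) F →ₗ[F] F) :
    (N.map ψ).rank ≤ 2 * (s * (n + d / 2).choose n) := by
  classical
  obtain ⟨U, V, hUV⟩ := aux_factor N s hs hr
  set w : (Fin n →₀ ℕ) → F := fun γ => if γ.degree ≤ d then ψ (MvPolynomial.monomial γ 1) else 0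
    with hw
  have key : N.map ψ =
      (Matrix.of fun i j => ∑ k, ∑ α ∈ auxS n (d/2), MvPowerSeries.coeff α (U i k) *
        ∑ β ∈ auxS n d, w (α + β) * MvPowerSeries.coeff β (V k j)) +
      (Matrix.of fun i j => ∑ k, ∑ β ∈ auxS n (d/2), (∑ α ∈ auxS n d \ auxS n (d/2),
        w (α + β) * MvPowerSeries.coeff α (U i k)) * MvPowerSeries.coeff β (V k j)) := by
    ext i j
    have h1 : ψ (N i j) = ∑ γ ∈ auxS n d, w γ * MvPolynomial.coeff γ (N i j) := by
      conv_lhs => rw [MvPolynomial.as_sum (N i j)]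
      rw [map_sum]
      rw [Finset.sum_subset (s₂ := auxS n d)]
      · refine Finset.sum_congr rfl fun γ hγ => ?_
        rw [hw]; simp only [if_pos (mem_auxS.1 hγ)]
        rw [← mul_one (MvPolynomial.coeff γ (N i j)), ← smul_eq_mul, ← MvPolynomial.smul_monomial,
          map_smul, smul_eq_mul, smul_eq_mul, mul_one, mul_comm]
      · intro γ hγ
        rw [mem_auxS]
        exact (MvPolynomial.le_totalDegree hγ).trans (hd i j)
      · intro γ _ hγ
        rw [MvPolynomial.notMem_support_iff.1 hγ]; simp
    have h2 : ∀ γ, MvPolynomial.coeff γ (N i j) = ∑ k, ∑ p ∈ Finset.HasAntidiagonal.antidiagonal γ,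
        MvPowerSeries.coeff p.1 (U i k) * MvPowerSeries.coeff p.2 (V k j) := by
      intro γ
      have := congrArg (MvPowerSeries.coeff γ) (congrFun (congrFun hUV i) j)
      rw [Matrix.map_apply, MvPolynomial.coeToMvPowerSeries.ringHom_apply, MvPolynomial.coeff_coe,
        Matrix.mul_apply, map_sum] at this
      rw [this]
      simp only [MvPowerSeries.coeff_mul]
    have h3 : ψ (N i j) = ∑ k, ∑ α ∈ auxS n d, ∑ β ∈ auxS n d, w (α + β) *
        (MvPowerSeries.coeff α (U i k) * MvPowerSeries.coeff β (V k j)) := by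
      rw [h1]
      simp only [h2, Finset.mul_sum]
      rw [Finset.sum_comm]
      refine Finset.sum_congr rfl fun k _ => ?_
      rw [← Finset.sum_product', Finset.sum_sigma']
      symm
      rw [← Finset.sum_filter_of_ne (p := fun x : (Fin n →₀ ℕ) × (Fin n →₀ ℕ) => (x.1 + x.2).degree ≤ d)]
      · refine Finset.sum_bij' (fun x _ => ⟨x.1 + x.2, x⟩) (fun y _ => y.2) ?_ ?_ ?_ ?_ ?_
        · intro x hx
          simp only [Finset.mem_filter] at hx
          simp [mem_auxS, -map_add, hx.2]
        · rintro ⟨γ, x⟩ hx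
          simp only [Finset.mem_sigma, Finset.HasAntidiagonal.mem_antidiagonal, mem_auxS] at hx
          obtain ⟨hx1, rfl⟩ := hx
          rw [map_add] at hx1
          simp only [Finset.mem_filter, Finset.mem_product, mem_auxS, map_add]
          omega
        · intro x hx; rfl
        · rintro ⟨γ, x⟩ hx
          simp only [Finset.mem_sigma, Finset.HasAntidiagonal.mem_antidiagonal, mem_auxS] at hx
          obtain ⟨hx1, rfl⟩ := hx
          rfl
        · intro x hx; rfl
      · intro x _ hne
        by_contra hlt
        apply hne
        simp only [hw]
        rw [if_neg hlt, zero_mul]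
    rw [Matrix.map_apply, h3, Matrix.add_apply, Matrix.of_apply, Matrix.of_apply,
      ← Finset.sum_add_distrib]
    refine Finset.sum_congr rfl fun k _ => ?_
    have hsub : auxS n (d/2) ⊆ auxS n d := by
      intro α hα
      rw [mem_auxS] at *
      omega
    rw [← Finset.sum_sdiff hsub, add_comm]
    congr 1
    · refine Finset.sum_congr rfl fun α _ => ?_
      rw [Finset.mul_sum]
      exact Finset.sum_congr rfl fun β _ => by ring
    · rw [Finset.sum_comm]
      rw [← Finset.sum_subset hsub]
      · refine Finset.sum_congr rfl fun β _ => ?_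
        rw [Finset.sum_mul]
        exact Finset.sum_congr rfl fun α _ => by ring
      · intro β hβ hβ'
        refine Finset.sum_eq_zero fun α hα => ?_
        simp only [Finset.mem_sdiff, mem_auxS] at hα hβ'
        simp only [hw]
        rw [if_neg, zero_mul]
        rw [map_add]; omega
  rw [key]
  refine (aux_rank_add _ _).trans ?_
  have hc := Nat.mul_le_mul_left s (card_auxS n (d/2))
  have b1 := (aux_rank_sum (m := m) (auxS n (d/2)) (fun α k i => MvPowerSeries.coeff α (U i k))
    (fun α k j => ∑ β ∈ auxS n d, w (α + β) * MvPowerSeries.coeff β (V k j)))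
  have b2 := (aux_rank_sum (m := m) (auxS n (d/2)) (fun β k i => ∑ α ∈ auxS n d \ auxS n (d/2),
        w (α + β) * MvPowerSeries.coeff α (U i k))
    (fun β k j => MvPowerSeries.coeff β (V k j)))
  omega

lemma aux_shift_deg {F : Type*} [Field F] {n d : ℕ} (t : Fin n → F) (p : MvPolynomial (Fin n) F)
    (hp : p.totalDegree ≤ d) :
    (MvPolynomial.aeval (fun i => MvPolynomial.X i + MvPolynomial.C (t i)) p :
      MvPolynomial (Fin n) F).totalDegree ≤ d := by
  rw [MvPolynomial.aeval_def, MvPolynomial.eval₂_eq']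
  apply MvPolynomial.totalDegree_finsetSum_le
  intro γ hγ
  refine (MvPolynomial.totalDegree_mul _ _).trans ?_
  rw [MvPolynomial.algebraMap_eq, MvPolynomial.totalDegree_C, zero_add]
  refine (MvPolynomial.totalDegree_finsetProd _ _).trans ?_
  refine le_trans ?_ ((MvPolynomial.le_totalDegree hγ).trans hp)
  change _ ≤ γ.degree
  rw [Finsupp.degree_eq_sum]
  refine Finset.sum_le_sum fun i _ => ?_
  refine (MvPolynomial.totalDegree_pow _ _).trans ?_
  have : (MvPolynomial.X i + MvPolynomial.C (t i)).totalDegree ≤ 1 := by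
    refine (MvPolynomial.totalDegree_add _ _).trans ?_
    simp
  nlinarith

lemma aux_global {F : Type*} [Field F] [CharZero F] {n m : ℕ} (d r : ℕ)
    (M : Matrix (Fin m) (Fin m) (MvPolynomial (Fin n) F))
    (hd : ∀ i j, (M i j).totalDegree ≤ d)
    (hr : ∀ a : Fin n → F, (M.map (MvPolynomial.eval a)).rank ≤ r)
    (ψ : MvPolynomial (Fin n) F →ₗ[F] F) :
    (M.map ψ).rank ≤ 2 * (r * (n + d / 2).choose n) := by
  classical
  obtain ⟨t, ht⟩ : ∃ t : Fin n → F, ∀ a, (M.map (MvPolynomial.eval a)).rank ≤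
      (M.map (MvPolynomial.eval t)).rank := by
    have hfin : (Set.range fun a : Fin n → F => (M.map (MvPolynomial.eval a)).rank).Finite :=
      (Set.finite_Iic r).subset (by rintro _ ⟨a, rfl⟩; exact hr a)
    obtain ⟨_, ⟨t, rfl⟩, ht⟩ := Set.exists_max_image _ id hfin (Set.range_nonempty _)
    exact ⟨t, fun a => ht _ ⟨a, rfl⟩⟩
  let sh : MvPolynomial (Fin n) F →ₐ[F] MvPolynomial (Fin n) F :=
    MvPolynomial.aeval (fun i => MvPolynomial.X i + MvPolynomial.C (t i))
  let us : MvPolynomial (Fin n) F →ₐ[F] MvPolynomial (Fin n) F :=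
    MvPolynomial.aeval (fun i => MvPolynomial.X i - MvPolynomial.C (t i))
  have hus : ∀ p, us (sh p) = p := by
    intro p
    have : us.comp sh = AlgHom.id F _ := by
      apply MvPolynomial.algHom_ext
      intro i
      simp only [us, sh, AlgHom.comp_apply, MvPolynomial.aeval_X, map_add, AlgHom.id_apply]
      rw [← MvPolynomial.algebraMap_eq, AlgHom.commutes]
      simp
    exact DFunLike.congr_fun this p
  have hev : ∀ a p, MvPolynomial.eval a (sh p) = MvPolynomial.eval (a + t) p := by
    intro a p
    have : (MvPolynomial.aeval a).comp sh = MvPolynomial.aeval (R := F) (a + t) := by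
      apply MvPolynomial.algHom_ext
      intro i
      simp [sh]
    have := DFunLike.congr_fun this p
    simpa [MvPolynomial.aeval_eq_eval] using this
  have hm : ∀ a, (M.map sh).map (MvPolynomial.eval a) = M.map (MvPolynomial.eval (a + t)) := by
    intro a; ext i j; simp [hev]
  have h := aux_local d (M.map (MvPolynomial.eval t)).rank (M.map sh)
    (fun i j => aux_shift_deg t _ (hd i j)) (by rw [hm, zero_add])
    (fun a => by rw [hm]; exact ht _) (ψ ∘ₗ us.toLinearMap)
  have h2 : (M.map sh).map (ψ ∘ₗ us.toLinearMap) = M.map ψ := by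
    ext i j; simp [hus]
  rw [h2] at h
  refine h.trans ?_
  have := hr t
  gcongr

lemma aux_multinomial {F : Type*} [Field F] [CharZero F] (n d : ℕ) :
    ∃ c : (Fin n →₀ ℕ) → F, (∀ α, c α ≠ 0) ∧ ∀ a : Fin n → F,
      (MvPolynomial.C 1 + ∑ i, MvPolynomial.C (a i) * MvPolynomial.X i) ^ d =
        ∑ α ∈ auxS n d, (c α * ∏ i, a i ^ α i) • MvPolynomial.monomial α (1 : F) := by
  classical
  refine ⟨fun α => (Nat.multinomial Finset.univ
    (fun o : Option (Fin n) => o.elim (d - α.degree) α) : F), ?_, ?_⟩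
  · intro α
    exact Nat.cast_ne_zero.2 (Nat.multinomial_pos _ _).ne'
  · intro a
    have h := Finset.sum_pow_eq_sum_piAntidiag (Finset.univ : Finset (Option (Fin n)))
      (fun o => o.elim (1 : MvPolynomial (Fin n) F)
        (fun i => MvPolynomial.C (a i) * MvPolynomial.X i)) d
    rw [Fintype.sum_option] at h
    simp only [Option.elim] at h
    rw [map_one, h]
    symm
    refine Finset.sum_bij' (fun α _ => fun o : Option (Fin n) => o.elim (d - α.degree) α)
      (fun k _ => Finsupp.equivFunOnFinite.symm (fun i => k (some i))) ?_ ?_ ?_ ?_ ?_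
    · intro α hα
      rw [mem_auxS] at hα
      simp only [Finset.mem_piAntidiag, Fintype.sum_option, Option.elim]
      rw [← Finsupp.degree_eq_sum]
      simp
      omega
    · intro k hk
      simp only [Finset.mem_piAntidiag, Fintype.sum_option] at hk
      rw [mem_auxS, Finsupp.degree_eq_sum]
      simp only [Finsupp.equivFunOnFinite_symm_apply_apply]
      omega
    · intro α hα
      ext i; simp
    · intro k hk
      simp only [Finset.mem_piAntidiag, Fintype.sum_option] at hk
      funext o
      cases o with
      | none =>
        simp only [Option.elim]
        rw [Finsupp.degree_eq_sum]
        simp only [Finsupp.equivFunOnFinite_symm_apply_apply]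
        omega
      | some i => simp
    · intro α hα
      simp only [Fintype.prod_option, Option.elim, one_pow, one_mul, mul_pow,
        Finset.prod_mul_distrib]
      rw [MvPolynomial.monomial_eq, Finsupp.prod_fintype _ _ (by simp), MvPolynomial.smul_eq_C_mul]
      simp only [map_mul, map_natCast, map_prod, map_pow, map_one, one_mul, mul_assoc]

theorem stmt12 (F : Type*) [Field F] [IsAlgClosed F] [CharZero F] (n m d r : ℕ)
    (L : MvPolynomial (Fin n) F →ₗ[F] Matrix (Fin m) (Fin m) F)
    (hL : ∀ (a0 : F) (a : Fin n → F),
      (L ((MvPolynomial.C a0 + ∑ i, MvPolynomial.C (a i) * MvPolynomial.X i) ^ d)).rank ≤ r)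
    (f : MvPolynomial (Fin n) F) (hf : f.totalDegree ≤ d) :
    (L f).rank ≤ r * (d + 1) * (n + d / 2).choose n := by
  classical
  rcases Nat.eq_zero_or_pos d with rfl | hd
  · have h1 : f = f.coeff 0 • (1 : MvPolynomial (Fin n) F) := by
      rw [MvPolynomial.smul_eq_C_mul, mul_one]
      exact MvPolynomial.totalDegree_eq_zero_iff_eq_C.1 (by omega)
    have h2 := hL 0 0
    rw [pow_zero] at h2
    rw [h1, map_smul]
    have h3 : (f.coeff 0 • L 1).rank ≤ (L 1).rank := by
      have : f.coeff 0 • L 1 = L 1 * (f.coeff 0 • (1 : Matrix (Fin m) (Fin m) F)) := by simp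
      rw [this]
      exact Matrix.rank_mul_le_left _ _
    simpa using h3.trans h2
  obtain ⟨c, hc, hmul⟩ := aux_multinomial (F := F) n d
  let M : Matrix (Fin m) (Fin m) (MvPolynomial (Fin n) F) := Matrix.of fun i j =>
    ∑ α ∈ auxS n d, MvPolynomial.monomial α (c α * L (MvPolynomial.monomial α 1) i j)
  let ψ : MvPolynomial (Fin n) F →ₗ[F] F :=
    ∑ α ∈ auxS n d, (f.coeff α * (c α)⁻¹) • MvPolynomial.lcoeff F α
  have h := aux_global d r M ?_ ?_ ψ
  · have hM : M.map ψ = L f := by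
      have hfs : f = ∑ α ∈ auxS n d, f.coeff α • MvPolynomial.monomial α (1 : F) := by
        conv_lhs => rw [MvPolynomial.as_sum f]
        rw [Finset.sum_subset (s₂ := auxS n d)]
        · exact Finset.sum_congr rfl fun α _ => by rw [MvPolynomial.smul_monomial]; simp
        · intro γ hγ
          rw [mem_auxS]
          exact (MvPolynomial.le_totalDegree hγ).trans hf
        · intro γ _ hγ
          rw [MvPolynomial.notMem_support_iff.1 hγ]; simp
      ext i j
      conv_rhs => rw [hfs]
      rw [map_sum, Matrix.sum_apply, Matrix.map_apply]
      simp only [ψ, LinearMap.sum_apply, LinearMap.smul_apply, MvPolynomial.lcoeff_apply, map_smul,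
        Matrix.smul_apply, smul_eq_mul]
      refine Finset.sum_congr rfl fun α hα => ?_
      have : MvPolynomial.coeff α (M i j) = c α * L (MvPolynomial.monomial α 1) i j := by
        simp only [M, Matrix.of_apply, MvPolynomial.coeff_sum, MvPolynomial.coeff_monomial]
        rw [Finset.sum_ite_eq' (auxS n d) α, if_pos hα]
      rw [this]
      field_simp [hc α]
    rw [hM] at h
    refine h.trans ?_
    have : 2 ≤ d + 1 := by omega
    calc 2 * (r * (n + d / 2).choose n) ≤ (d + 1) * (r * (n + d / 2).choose n) := by gcongr
      _ = _ := by ring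
  · intro i j
    apply MvPolynomial.totalDegree_finsetSum_le
    intro α hα
    exact (MvPolynomial.totalDegree_monomial_le _ _).trans (mem_auxS.1 hα)
  · intro a
    have := hL 1 a
    rw [hmul, map_sum] at this
    convert this using 2
    ext i j
    rw [Matrix.sum_apply]
    simp only [M, Matrix.map_apply, Matrix.of_apply, map_sum, MvPolynomial.eval_monomial, map_smul,
      Matrix.smul_apply, smul_eq_mul]
    refine Finset.sum_congr rfl fun α _ => ?_
    rw [Finsupp.prod_fintype _ _ (by simp)]
    ring
end
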